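/- arXiv:2110.00769 — 2 statements merged into one kernel-verified Lean document; each statement's English description precedes it below -/
import Mathlib

section
/- Let q be a prime power and n ≥ 2 with (n−1) dividing q²−1, and set k₀ = ⌊(n+q−1)/(q+1)⌋. Assume that (n−1) does not divide k₀(q+1), that (n−1) does not divide (k₀+1)(q+1), and that 2k₀ + q ≤ n. Then there exist n' ∈ {n, n+1} and an MDS Hermitian self-orthogonal [n', k₀+2]_{q²} code (whose Hermitian dual has minimum distance k₀+3, yielding an MDS quantum code [[n', n'−2(k₀+2), k₀+3]]_q). -/
/-!
Write `n = N + 1`, `k = k₀ + 2`, so that `k₀ = ⌈N / (q + 1)⌉`. The code always has length `n' = n`.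

The generic code consists of the vectors `(v f(0), f(1), f(ζ), …, f(ζ^(N-1)))`, where `f` runs over
the polynomials of degree `< k`, `ζ` is a primitive `N`-th root of unity and `v ^ (q + 1) = -N`; such
a `v` exists because `-N` lies in `𝔽_q` and the norm `𝔽_{q²} → 𝔽_q` is surjective. The Hermitian
product of the rows coming from `X^i` and `X^j` is a geometric sum in `ζ ^ (i + q j)`, plus
`v ^ (q + 1)` when `i = j = 0`. It vanishes for all `i, j < k` provided `N ∤ i + q j` for every
`(i, j) ≠ (0, 0)` (`exists_code_of_not_dvd`).

By elementary size estimates (`exceptional_of_dvd`) this proviso follows from the hypotheses except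
when `q = 5`, `N = 8`, `k₀ = 2`, where `8 ∣ 3 + 5 · 1`. In that case no generalized Reed–Solomon
code is used; instead there is an explicit code (`exists_code_five`). Let `s ∈ 𝔽₂₅` with `s² = 2`,
and let `A` be the circulant `5 × 5` matrix with first row `(1, 1, 2s, -1 + 2s, 2s)`. Then `[I | A]`
generates a Hermitian self-dual MDS code of length `10`, and shortening it at one coordinate gives a
`[9, 4]` Hermitian self-orthogonal MDS code. Its `4 × 4` minors and Hermitian products are computed
in `ℤ[√2]`, modulo `5`.

In both cases `mds_of_generator` deduces the dimension and both minimum distances from the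
independence of any `k` columns of the generator matrix.
-/

open scoped BigOperators

/-- A linear code `C ⊆ 𝔽_{q²}ⁿ` is Hermitian self-orthogonal if
`⟨c,c'⟩_H = ∑ i, c i * (c' i)^q = 0` for all codewords `c, c'`. -/
def IsHermSelfOrth (q : ℕ) {F : Type*} [Field F] {n : ℕ}
    (C : Submodule F (Fin n → F)) : Prop :=
  ∀ c ∈ C, ∀ c' ∈ C, ∑ i, c i * (c' i) ^ q = 0

/-- The minimum Hamming distance of the code `C` equals `d`. -/
def MinDistEq {F : Type*} [Field F] {n : ℕ}
    (C : Submodule F (Fin n → F)) (d : ℕ) : Prop :=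
  (∀ c ∈ C, c ≠ 0 → d ≤ Set.ncard {i | c i ≠ 0}) ∧
  (∃ c ∈ C, c ≠ 0 ∧ Set.ncard {i | c i ≠ 0} = d)

/-- The Hermitian dual `C^{⊥_H} = {x : ⟨x,c⟩_H = 0 for all c ∈ C}` of a code. -/
def hermDual (q : ℕ) {F : Type*} [Field F] {n : ℕ}
    (C : Submodule F (Fin n → F)) : Submodule F (Fin n → F) where
  carrier := {x | ∀ c ∈ C, ∑ i, x i * (c i) ^ q = 0}
  add_mem' := by
    intro a b ha hb c hc
    have h1 := ha c hc
    have h2 := hb c hc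
    calc ∑ i, (a + b) i * c i ^ q
        = ∑ i, (a i * c i ^ q + b i * c i ^ q) := by
          simp [add_mul]
      _ = 0 := by rw [Finset.sum_add_distrib, h1, h2, add_zero]
  zero_mem' := by intro c hc; simp
  smul_mem' := by
    intro r x hx c hc
    have h := hx c hc
    calc ∑ i, (r • x) i * c i ^ q = r * ∑ i, x i * c i ^ q := by
          simp [Finset.mul_sum, mul_assoc]
      _ = 0 := by rw [h, mul_zero]

/-! ### MDS codes from generator matrices -/

/-- Let `g` be a `k × n` generator matrix, `0 < k < n`, any `k` columns of which are independent and
whose rows are pairwise (and each with itself) Hermitian orthogonal. Its row space is a Hermitian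
self-orthogonal MDS code of dimension `k`, and its Hermitian dual has minimum distance `k + 1`.
Additivity of `x ↦ x ^ q`, supplied by `φ`, reduces orthogonality to the rows of `g`. -/
theorem mds_of_generator {q : ℕ} {F : Type*} [Field F] (φ : F →+* F) (hφ : ∀ x, φ x = x ^ q)
    {k n : ℕ} (hk : 0 < k) (hkn : k < n) (g : Fin k → Fin n → F)
    (hg : ∀ e : Fin k → Fin n, StrictMono e → ∀ a : Fin k → F,
      (∀ t, ∑ j, a j * g j (e t) = 0) → a = 0)
    (hso : ∀ j l, ∑ i, g j i * (g l i) ^ q = 0) :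
    ∃ C : Submodule F (Fin n → F), Module.finrank F C = k ∧ IsHermSelfOrth q C ∧
      MinDistEq C (n - k + 1) ∧ MinDistEq (hermDual q C) (k + 1) := by
  classical
  set G : (Fin k → F) →ₗ[F] (Fin n → F) := Fintype.linearCombination F g with hG
  have hGa : ∀ a i, G a i = ∑ j, a j * g j i := by
    intro a i
    simp [hG, Fintype.linearCombination_apply]
  have hgS : ∀ S : Finset (Fin n), S.card = k → ∀ a, (∀ i ∈ S, G a i = 0) → a = 0 := by
    intro S hS a ha
    refine hg (S.orderEmbOfFin hS) (S.orderEmbOfFin hS).strictMono a fun t => ?_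
    rw [← hGa]
    exact ha _ (S.orderEmbOfFin_mem hS t)
  have hwt : ∀ c : Fin n → F,
      Set.ncard {i | c i ≠ 0} = (Finset.univ.filter fun i => c i ≠ 0).card := by
    intro c
    rw [← Set.ncard_coe_finset]
    simp
  have hinj : Function.Injective G := by
    rw [injective_iff_map_eq_zero]
    intro a ha
    obtain ⟨S, -, hS⟩ := Finset.exists_subset_card_eq
      (s := (Finset.univ : Finset (Fin n))) (n := k) (by simpa using hkn.le)
    exact hgS S hS a fun i _ => by simp [ha]
  have hφG : ∀ (x : Fin n → F) (a : Fin k → F),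
      ∑ i, x i * (G a i) ^ q = ∑ j, φ (a j) * ∑ i, x i * (g j i) ^ q := by
    intro x a
    simp only [← hφ, hGa, map_sum, map_mul, Finset.mul_sum]
    rw [Finset.sum_comm]
    refine Finset.sum_congr rfl fun j _ => Finset.sum_congr rfl fun i _ => ?_
    ring
  have hlow : ∀ c ∈ LinearMap.range G, c ≠ 0 → n - k + 1 ≤ Set.ncard {i | c i ≠ 0} := by
    rintro _ ⟨a, rfl⟩ hc
    by_contra hlt
    rw [hwt] at hlt
    have hcard := Finset.card_filter_add_card_filter_not
      (s := (Finset.univ : Finset (Fin n))) (fun i => G a i ≠ 0)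
    rw [Finset.card_univ, Fintype.card_fin] at hcard
    obtain ⟨S, hSs, hS⟩ := Finset.exists_subset_card_eq
      (s := Finset.univ.filter fun i => ¬ G a i ≠ 0) (n := k) (by omega)
    apply hc
    rw [hgS S hS a fun i hi => by simpa using hSs hi, map_zero]
  have hlow' : ∀ x ∈ hermDual q (LinearMap.range G), x ≠ 0 →
      k + 1 ≤ Set.ncard {i | x i ≠ 0} := by
    intro x hx hx0
    by_contra hlt
    rw [hwt] at hlt
    obtain ⟨S, hSs, hS⟩ := Finset.exists_superset_card_eq
      (s := Finset.univ.filter fun i => x i ≠ 0) (n := k) (by omega) (by simpa using hkn.le)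
    -- restriction to `S` is bijective on messages, so some codeword is a unit vector on `S`
    let R : (Fin k → F) →ₗ[F] (S → F) := LinearMap.pi fun i => (LinearMap.proj i.1).comp G
    have hR : Function.Surjective R := by
      rw [← LinearMap.injective_iff_surjective_of_finrank_eq_finrank (by simp [hS]),
        injective_iff_map_eq_zero]
      intro a ha
      exact hgS S hS a fun i hi => congrFun ha ⟨i, hi⟩
    obtain ⟨i, hi⟩ := Function.ne_iff.1 hx0
    have hiS : i ∈ S := hSs (by simpa using hi)
    obtain ⟨a, ha⟩ := hR (Pi.single ⟨i, hiS⟩ 1)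
    have hsum := hx (G a) ⟨a, rfl⟩
    rw [Finset.sum_eq_single i] at hsum
    · have : G a i = 1 := (congrFun ha ⟨i, hiS⟩).trans (Pi.single_eq_same _ _)
      rw [this, one_pow, mul_one] at hsum
      exact hi hsum
    · intro j _ hj
      by_cases hjS : j ∈ S
      · have h0 : G a j = 0 := by
          have := congrFun ha ⟨j, hjS⟩
          rwa [Pi.single_eq_of_ne (by simpa using hj)] at this
        rw [h0, ← hφ, map_zero, mul_zero]
      · have : x j = 0 := by
          by_contra h
          exact hjS (hSs (by simpa using h))
        rw [this, zero_mul]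
    · simp
  refine ⟨LinearMap.range G, ?_, ?_, ⟨hlow, ?_⟩, ⟨hlow', ?_⟩⟩
  · rw [LinearMap.finrank_range_of_inj hinj]
    simp
  · rintro _ ⟨a, rfl⟩ _ ⟨b, rfl⟩
    rw [hφG]
    refine Finset.sum_eq_zero fun l _ => ?_
    simp only [hGa, Finset.sum_mul]
    rw [Finset.sum_comm, Finset.sum_eq_zero, mul_zero]
    intro j _
    simp only [mul_assoc]
    rw [← Finset.mul_sum, hso, mul_zero]
  · -- a codeword vanishing on the first `k - 1` coordinates
    let R : (Fin k → F) →ₗ[F] (Fin (k - 1) → F) :=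
      LinearMap.pi fun t => (LinearMap.proj (Fin.castLE (by omega) t)).comp G
    obtain ⟨a, ha, ha0⟩ := (Submodule.ne_bot_iff _).1
      (LinearMap.ker_ne_bot_of_finrank_lt (f := R) (by simp; omega))
    have hc0 : G a ≠ 0 := fun h => ha0 (hinj (by rw [h, map_zero]))
    refine ⟨G a, ⟨a, rfl⟩, hc0, le_antisymm ?_ (hlow _ ⟨a, rfl⟩ hc0)⟩
    have hsub : (Finset.univ.filter fun i => G a i ≠ 0) ⊆
        (Finset.univ.filter fun i : Fin n => ¬ (i : ℕ) < k - 1) := by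
      intro i hi
      simp only [Finset.mem_filter, Finset.mem_univ, true_and] at hi ⊢
      intro hlt
      exact hi (congrFun (LinearMap.mem_ker.1 ha) ⟨i, hlt⟩)
    have hcard := Finset.card_filter_add_card_filter_not
      (s := (Finset.univ : Finset (Fin n))) (fun i => (i : ℕ) < k - 1)
    rw [Finset.card_univ, Fintype.card_fin, Fin.card_filter_val_lt] at hcard
    have := Finset.card_le_card hsub
    rw [hwt]
    omega
  · -- a dual vector vanishing on the last `n - k - 1` coordinates
    let R : (Fin n → F) →ₗ[F] (Fin k → F) × (Fin (n - k - 1) → F) :=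
      LinearMap.prod
        (LinearMap.pi fun j => ∑ i, (g j i ^ q) • LinearMap.proj i)
        (LinearMap.pi fun t => LinearMap.proj (⟨k + 1 + t, by omega⟩ : Fin n))
    obtain ⟨x, hx, hx0⟩ := (Submodule.ne_bot_iff _).1
      (LinearMap.ker_ne_bot_of_finrank_lt (f := R) (by simp; omega))
    have hx' := LinearMap.mem_ker.1 hx
    have hmem : x ∈ hermDual q (LinearMap.range G) := by
      rintro _ ⟨a, rfl⟩
      rw [hφG]
      refine Finset.sum_eq_zero fun j _ => ?_
      have : (∑ i, (g j i ^ q) • (LinearMap.proj i : (Fin n → F) →ₗ[F] F)) x = 0 :=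
        congrFun (congrArg Prod.fst hx') j
      simp only [LinearMap.sum_apply, LinearMap.smul_apply, LinearMap.proj_apply,
        smul_eq_mul] at this
      simp only [mul_comm (x _)]
      rw [this, mul_zero]
    refine ⟨x, hmem, hx0, le_antisymm ?_ (hlow' _ hmem hx0)⟩
    have hsub : (Finset.univ.filter fun i => x i ≠ 0) ⊆
        (Finset.univ.filter fun i : Fin n => (i : ℕ) < k + 1) := by
      intro i hi
      simp only [Finset.mem_filter, Finset.mem_univ, true_and] at hi ⊢
      by_contra hlt
      apply hi
      have h : x ⟨k + 1 + (i - (k + 1)), by omega⟩ = 0 :=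
        congrFun (congrArg Prod.snd hx') ⟨i - (k + 1), by omega⟩
      rwa [show (⟨k + 1 + (i - (k + 1)), by omega⟩ : Fin n) = i from Fin.ext (by simp; omega)] at h
    have := Finset.card_le_card hsub
    rw [Fin.card_filter_val_lt] at this
    rw [hwt]
    omega

/-! ### Arithmetic of the exponents -/

/-- The off-diagonal case `i < j` of `exceptional_of_dvd`. The multiple `j + q i` of `N` is too
small to be positive unless `i ≥ k - 1`; then it must equal `N`, and `N ∣ (j - i)(q - 1)` leaves a
single possibility. -/
theorem eq_five_of_dvd_of_lt {q N k i j : ℕ} (hq : 2 ≤ q)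
    (hlow : N ≤ k * (q + 1)) (hup : k * (q + 1) ≤ N + q)
    (h1 : ¬ N ∣ k * (q + 1)) (h3 : 2 * k + q ≤ N + 1)
    (hj : j ≤ k + 1) (hij : i < j) (hd : N ∣ i + q * j) (hd' : N ∣ j + q * i) :
    q = 5 ∧ N = 8 ∧ k = 2 := by
  have hk : 2 ≤ k := by
    by_contra hlt
    interval_cases k
    · simp at h1
    · exact h1 (by rw [show N = 1 * (q + 1) by omega])
  obtain ⟨t, ht⟩ : ∃ t, k * (q + 1) = N + t := ⟨_, (Nat.add_sub_cancel' hlow).symm⟩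
  have ht0 : t ≠ 0 := by
    rintro rfl
    exact h1 (by rw [ht, add_zero])
  have htq : t ≤ q := by omega
  have hpos : N ≤ j + q * i := Nat.le_of_dvd (by omega) hd'
  have hik : k - 1 ≤ i := by
    by_contra hlt
    obtain ⟨m, rfl⟩ : ∃ m, k = m + 2 := ⟨k - 2, by omega⟩
    have : q * i ≤ q * m := Nat.mul_le_mul_left _ (by omega)
    nlinarith
  -- `j + q * i` is a multiple of `N` lying in `[N, 2 * N)`
  have heq : j + q * i < 2 * N → j + q * i = N := by
    intro hlt
    obtain ⟨c, hc⟩ := hd'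
    have : c < 2 := by
      by_contra h
      have : N * 2 ≤ N * c := Nat.mul_le_mul_left _ (by omega)
      omega
    interval_cases c <;> omega
  obtain rfl | rfl : i = k ∨ k = i + 1 := by omega
  · have : j = i + 1 := by omega
    subst this
    have := heq (by nlinarith)
    nlinarith
  · have hsum : j + q * i + (q + 1) = N + t + (j - i) := by
      have : (i + 1) * (q + 1) = q * i + q + i + 1 := by ring
      omega
    have hN' := heq (by omega)
    -- subtracting the two multiples of `N` leaves `(j - i) * (q - 1)`
    have hdiff : N ∣ (j - i) * (q - 1) := by
      have h := Nat.dvd_sub hd hd'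
      obtain ⟨d, rfl⟩ : ∃ d, j = i + d := ⟨j - i, by omega⟩
      obtain ⟨r, rfl⟩ : ∃ r, q = r + 1 := ⟨q - 1, by omega⟩
      have e : i + (r + 1) * (i + d) - (i + d + (r + 1) * i) = (i + d - i) * (r + 1 - 1) := by
        rw [Nat.sub_eq_iff_eq_add (by nlinarith)]
        simp
        ring
      rwa [e] at h
    obtain h | h : j - i = 1 ∨ j - i = 2 := by omega
    · rw [h] at hdiff
      have := Nat.le_of_dvd (by omega) hdiff
      omega
    · rw [h] at hdiff
      obtain ⟨c, hc⟩ := hdiff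
      have hc1 : c = 1 := by
        have h0 : c ≠ 0 := by
          rintro rfl
          omega
        by_contra h1'
        have : N * 2 ≤ N * c := Nat.mul_le_mul_left _ (by omega)
        omega
      subst hc1
      have hi1 : i = 1 := by
        by_contra hne
        have : q * 2 ≤ q * i := Nat.mul_le_mul_left _ (by omega)
        omega
      subst hi1
      omega

/-- With `k = ⌈N / (q + 1)⌉`, encoded by `hlow` and `hup`, the exponents `i + q j` with
`i, j ≤ k + 1` not both zero avoid the multiples of `N`, apart from one set of parameters. The
condition is symmetric in `i` and `j` because `q ^ 2 ≡ 1` modulo `N`. -/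
theorem exceptional_of_dvd {q N k i j : ℕ} (hq : 2 ≤ q) (hN : N ∣ q ^ 2 - 1)
    (hlow : N ≤ k * (q + 1)) (hup : k * (q + 1) ≤ N + q)
    (h1 : ¬ N ∣ k * (q + 1)) (h2 : ¬ N ∣ (k + 1) * (q + 1)) (h3 : 2 * k + q ≤ N + 1)
    (hi : i ≤ k + 1) (hj : j ≤ k + 1) (h0 : i ≠ 0 ∨ j ≠ 0) (hd : N ∣ i + q * j) :
    q = 5 ∧ N = 8 ∧ k = 2 := by
  have hd' : N ∣ j + q * i := by
    have e : q * (i + q * j) = (j + q * i) + (q ^ 2 - 1) * j := by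
      have : 1 ≤ q ^ 2 := Nat.one_le_pow _ _ (by omega)
      zify [this]
      ring
    exact (Nat.dvd_add_left (hN.mul_right j)).1 (e ▸ hd.mul_left q)
  rcases lt_trichotomy i j with h | h | h
  · exact eq_five_of_dvd_of_lt hq hlow hup h1 h3 hj h hd hd'
  · subst h
    have hd2 : N ∣ i * (q + 1) := by
      rwa [show i + q * i = i * (q + 1) by ring] at hd
    have hle := Nat.le_of_dvd (Nat.mul_pos (by omega) (by omega)) hd2
    rcases lt_or_ge i k with h | h
    · have : (i + 1) * (q + 1) ≤ k * (q + 1) := Nat.mul_le_mul_right _ h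
      nlinarith
    · obtain rfl | rfl : i = k ∨ i = k + 1 := by omega
      · exact absurd hd2 h1
      · exact absurd hd2 h2
  · exact eq_five_of_dvd_of_lt hq hlow hup h1 h3 hi h hd' hd

/-! ### The generic code -/

/-- Surjectivity of the norm `x ↦ x ^ (q + 1)` from `𝔽_{q²}` onto `𝔽_q = {u | u ^ q = u}`, on
nonzero elements. -/
theorem exists_pow_eq_of_pow_eq_self {q : ℕ} (hq : 2 ≤ q) {F : Type*} [Field F] [Fintype F]
    (hF : Fintype.card F = q ^ 2) {u : F} (hu : u ≠ 0) (huq : u ^ q = u) :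
    ∃ v : F, v ^ (q + 1) = u := by
  classical
  obtain ⟨g, hg⟩ := IsCyclic.exists_generator (α := Fˣ)
  have hord : orderOf g = (q + 1) * (q - 1) := by
    rw [orderOf_eq_card_of_forall_mem_zpowers hg, Nat.card_eq_fintype_card,
      Fintype.card_units, hF]
    simpa using Nat.sq_sub_sq q 1
  obtain ⟨m, hm⟩ := (mem_powers_iff_mem_zpowers (x := g) (y := Units.mk0 u hu)).2 (hg _)
  have hm' : g ^ m = Units.mk0 u hu := hm
  have h1 : g ^ (m * (q - 1)) = 1 := by
    rw [pow_mul, hm']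
    ext
    have : u ^ (q - 1) * u = 1 * u := by
      rw [← pow_succ, Nat.sub_add_cancel (by omega), huq, one_mul]
    simpa using mul_right_cancel₀ hu this
  obtain ⟨c, rfl⟩ : q + 1 ∣ m := by
    have := orderOf_dvd_of_pow_eq_one h1
    rw [hord] at this
    exact Nat.dvd_of_mul_dvd_mul_right (by omega) this
  refine ⟨((g ^ c : Fˣ) : F), ?_⟩
  have := congrArg (Units.val) hm'
  rw [← Units.val_pow_eq_pow_val, ← pow_mul, mul_comm, this, Units.val_mk0]

theorem exists_primitiveRoot {q N : ℕ} (hq : 2 ≤ q) (hN : N ∣ q ^ 2 - 1) {F : Type*} [Field F]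
    [Fintype F] (hF : Fintype.card F = q ^ 2) : ∃ ζ : F, IsPrimitiveRoot ζ N := by
  classical
  obtain ⟨g, hg⟩ := IsCyclic.exists_ofOrder_eq_natCard (α := Fˣ)
  rw [Nat.card_eq_fintype_card, Fintype.card_units, hF] at hg
  obtain ⟨c, hc⟩ := hN
  have hpos : 0 < q ^ 2 - 1 := by
    have : 2 ^ 2 ≤ q ^ 2 := Nat.pow_le_pow_left hq 2
    omega
  have hprim : IsPrimitiveRoot (g : F) (q ^ 2 - 1) := by
    rw [IsPrimitiveRoot.coe_units_iff, ← hg]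
    exact IsPrimitiveRoot.orderOf g
  exact ⟨_, hprim.pow hpos (by rw [hc, mul_comm])⟩

theorem exists_frobenius {q : ℕ} (hq : IsPrimePow q) {F : Type*} [Field F]
    [Fintype F] (hF : Fintype.card F = q ^ 2) :
    ∃ φ : F →+* F, ∀ x, φ x = x ^ q := by
  obtain ⟨p, m, hp, hm, rfl⟩ := hq
  have hp' : p.Prime := hp.nat_prime
  have : Fact p.Prime := ⟨hp'⟩
  have : CharP F p := by
    refine charP_of_card_eq_prime_pow (f := m * 2) ?_
    rw [hF, pow_mul]
  exact ⟨iterateFrobenius F p m, fun x => iterateFrobenius_def p m x⟩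

/-- The generalized Reed–Solomon code on `0` and the `N`-th roots of unity, with column multiplier
`v` at `0`, where `v ^ (q + 1) = -N`, and `1` elsewhere. -/
theorem exists_code_of_not_dvd {q N k : ℕ} (hq : 2 ≤ q) (hN : N ∣ q ^ 2 - 1) {F : Type*}
    [Field F] [Fintype F] (hF : Fintype.card F = q ^ 2)
    (φ : F →+* F) (hφ : ∀ x, φ x = x ^ q) (hk : 0 < k) (hkN : k < N + 1)
    (hnd : ∀ i < k, ∀ j < k, (i ≠ 0 ∨ j ≠ 0) → ¬ N ∣ i + q * j) :
    ∃ C : Submodule F (Fin (N + 1) → F), Module.finrank F C = k ∧ IsHermSelfOrth q C ∧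
      MinDistEq C (N + 1 - k + 1) ∧ MinDistEq (hermDual q C) (k + 1) := by
  obtain ⟨ζ, hζ⟩ := exists_primitiveRoot hq hN hF
  have hN0 : (N : F) ≠ 0 := by
    intro h
    obtain ⟨c, hc⟩ := hN
    have h1 : ((q ^ 2 - 1 : ℕ) : F) = -1 := by
      rw [Nat.cast_sub (Nat.one_le_pow _ _ (by omega)), ← hF, FiniteField.cast_card_eq_zero]
      simp
    rw [hc, Nat.cast_mul, h, zero_mul] at h1
    exact one_ne_zero (neg_eq_zero.1 h1.symm)
  obtain ⟨v, hv⟩ := exists_pow_eq_of_pow_eq_self hq hF (neg_ne_zero.2 hN0)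
    (by rw [← hφ, map_neg, map_natCast])
  have hv0 : v ≠ 0 := by
    rintro rfl
    rw [zero_pow (by omega)] at hv
    exact hN0 (neg_eq_zero.1 hv.symm)
  have hζ0 : ζ ≠ 0 := hζ.ne_zero (by omega)
  -- `x` lists the evaluation points, `w` the column multipliers
  let x : Fin (N + 1) → F := Fin.cons 0 fun t : Fin N => ζ ^ (t : ℕ)
  let w : Fin (N + 1) → F := Fin.cons v fun _ => 1
  have hw : ∀ i, w i ≠ 0 := by
    intro i
    refine Fin.cases ?_ (fun t => ?_) i
    · simpa [w] using hv0
    · simp [w]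
  have hx : Function.Injective x := by
    refine Fin.cons_injective_iff.2 ⟨?_, ?_⟩
    · rintro ⟨t, ht⟩
      exact pow_ne_zero _ hζ0 ht
    · intro s t hst
      exact Fin.ext (hζ.pow_inj s.2 t.2 hst)
  refine mds_of_generator φ hφ hk hkN (fun j i => w i * x i ^ (j : ℕ)) ?_ ?_
  · intro e he a ha
    refine Matrix.eq_zero_of_forall_index_sum_pow_mul_eq_zero (hx.comp he.injective) fun t => ?_
    have h : w (e t) * ∑ j : Fin k, x (e t) ^ (j : ℕ) * a j = 0 := by
      rw [← ha t, Finset.mul_sum]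
      exact Finset.sum_congr rfl fun j _ => by ring
    exact (mul_eq_zero.1 h).resolve_left (hw _)
  · intro j l
    rw [Fin.sum_univ_succ]
    have hsum : ∑ t : Fin N, w t.succ * x t.succ ^ (j : ℕ) * (w t.succ * x t.succ ^ (l : ℕ)) ^ q
        = ∑ t ∈ Finset.range N, (ζ ^ (j + q * l : ℕ)) ^ t := by
      rw [Finset.sum_range]
      refine Finset.sum_congr rfl fun t _ => ?_
      simp only [w, x, Fin.cons_succ, one_mul, ← pow_mul, ← pow_add]
      congr 1
      ring
    rw [hsum]
    by_cases h0 : (j : ℕ) = 0 ∧ (l : ℕ) = 0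
    · simp only [h0.1, h0.2, w, x, Fin.cons_zero]
      simp only [pow_zero, mul_one, mul_zero, add_zero, one_pow, Finset.sum_const,
        Finset.card_range, nsmul_eq_mul, ← pow_succ', hv]
      ring
    · have h0' : (j : ℕ) ≠ 0 ∨ (l : ℕ) ≠ 0 := by omega
      have hne : ζ ^ (j + q * l : ℕ) ≠ 1 := fun h =>
        hnd j j.2 l l.2 h0' ((hζ.pow_eq_one_iff_dvd _).1 h)
      have hgeom : ∑ t ∈ Finset.range N, (ζ ^ (j + q * l : ℕ)) ^ t = 0 := by
        have h := geom_sum_mul (ζ ^ (j + q * l : ℕ)) N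
        rw [pow_right_comm, hζ.pow_eq_one, one_pow, sub_self] at h
        exact (mul_eq_zero.1 h).resolve_right (sub_ne_zero.2 hne)
      rw [hgeom, add_zero]
      simp only [x, w, Fin.cons_zero, mul_pow, ← pow_mul]
      rcases h0' with h | h
      · rw [zero_pow h]
        ring
      · rw [zero_pow (n := (l : ℕ) * q) (Nat.mul_ne_zero h (by omega))]
        ring

/-! ### The exceptional code over the field with 25 elements -/

/-- A lift to `ℤ[√2]` of the generator matrix of the exceptional `[9, 4]` code over `𝔽₂₅`: the
`4 × 4` identity followed by the first four rows of the circulant matrix on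
`(1, 1, 2√2, -1 + 2√2, 2√2)`. -/
def genRow : Fin 4 → Fin 9 → ℤ√2 :=
  ![![1, 0, 0, 0, 1, 1, ⟨0, 2⟩, ⟨-1, 2⟩, ⟨0, 2⟩],
    ![0, 1, 0, 0, ⟨0, 2⟩, 1, 1, ⟨0, 2⟩, ⟨-1, 2⟩],
    ![0, 0, 1, 0, ⟨-1, 2⟩, ⟨0, 2⟩, 1, 1, ⟨0, 2⟩],
    ![0, 0, 0, 1, ⟨0, 2⟩, ⟨-1, 2⟩, ⟨0, 2⟩, 1, 1]]

/-- The `2 × 2` minor of `g` on rows `r, s` and columns `c, d`. -/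
def minor2 {R : Type*} [CommRing R] (g : Fin 4 → Fin 9 → R) (r s : Fin 4) (c d : Fin 9) : R :=
  g r c * g s d - g r d * g s c

/-- The `4 × 4` minor of `g` on columns `a, b, c, d`, by Laplace expansion along the first two
rows. This form, unlike `Matrix.det`, is cheap to evaluate. -/
def minor4 {R : Type*} [CommRing R] (g : Fin 4 → Fin 9 → R) (a b c d : Fin 9) : R :=
  minor2 g 0 1 a b * minor2 g 2 3 c d - minor2 g 0 1 a c * minor2 g 2 3 b d
    + minor2 g 0 1 a d * minor2 g 2 3 b c + minor2 g 0 1 b c * minor2 g 2 3 a d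
    - minor2 g 0 1 b d * minor2 g 2 3 a c + minor2 g 0 1 c d * minor2 g 2 3 a b

theorem det_eq_minor4 {R : Type*} [CommRing R] (g : Fin 4 → Fin 9 → R) (e : Fin 4 → Fin 9) :
    Matrix.det (Matrix.of fun j t => g j (e t)) = minor4 g (e 0) (e 1) (e 2) (e 3) := by
  simp [Matrix.det_succ_row_zero, Fin.sum_univ_succ, Fin.succAbove, minor4, minor2]
  ring

/-- An element with norm prime to `5` is nonzero in `𝔽₂₅`; so all
maximal minors of the generator matrix are nonzero there. -/
theorem norm_minor4_genRow : ∀ a b : Fin 9, a < b → ∀ c : Fin 9, b < c → ∀ d : Fin 9, c < d →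
    ¬ (minor4 genRow a b c d).norm % 5 = 0 := by
  decide +kernel

/-- The rows are Hermitian orthogonal modulo `5`, conjugation in `ℤ[√2]` lifting `x ↦ x ^ 5`. -/
theorem hermitian_genRow : ∀ j l : Fin 4,
    (∑ i, genRow j i * star (genRow l i)).re % 5 = 0 ∧
    (∑ i, genRow j i * star (genRow l i)).im % 5 = 0 := by
  decide +kernel

/-- The case `q = 5`, `N = 8`, `k₀ = 2`: the code generated by the image of `genRow` in `𝔽₂₅`. -/
theorem exists_code_five {F : Type*} [Field F] [Fintype F] (hF : Fintype.card F = 5 ^ 2)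
    (φ : F →+* F) (hφ : ∀ x, φ x = x ^ 5) :
    ∃ C : Submodule F (Fin 9 → F), Module.finrank F C = 4 ∧ IsHermSelfOrth 5 C ∧
      MinDistEq C (9 - 4 + 1) ∧ MinDistEq (hermDual 5 C) (4 + 1) := by
  have : Fact (Nat.Prime 5) := ⟨by norm_num⟩
  have : CharP F 5 := charP_of_card_eq_prime_pow (f := 2) hF
  have hint : ∀ z : ℤ, (z : F) = 0 ↔ z % 5 = 0 := fun z => by
    rw [CharP.intCast_eq_zero_iff F 5 z, ← Int.dvd_iff_emod_eq_zero]
    norm_num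
  have h2 : (2 : F) ≠ 0 := by
    have := (hint 2).not.2 (by norm_num)
    exact_mod_cast this
  obtain ⟨v, hv⟩ := exists_pow_eq_of_pow_eq_self (by norm_num) hF h2
    (by rw [← hφ]; exact map_ofNat φ 2)
  have hs : v ^ 3 * v ^ 3 = ((2 : ℤ) : F) := by
    push_cast
    rw [← hv]
    ring
  -- reduction `ℤ[√2] → 𝔽₂₅`, with `√2 ↦ v ^ 3`
  let ψ : ℤ√2 →+* F := Zsqrtd.lift ⟨v ^ 3, hs⟩
  have hψ : ∀ z : ℤ√2, ψ z = z.re + z.im * v ^ 3 := fun z => rfl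
  have hconj : ∀ z : ℤ√2, ψ z ^ 5 = ψ (star z) := by
    intro z
    have h5 : (5 : F) = 0 := by
      have := (hint 5).2 (by norm_num)
      exact_mod_cast this
    rw [← hφ, hψ, hψ, map_add, map_mul, map_intCast, map_intCast, hφ]
    push_cast [Zsqrtd.re_star, Zsqrtd.im_star] at hs ⊢
    linear_combination (z.im : F) * v ^ 3 * (v ^ 3 * v ^ 3 + 2) * hs + (z.im : F) * v ^ 3 * h5
  have hker : ∀ z : ℤ√2, ψ z = 0 → z.norm % 5 = 0 := by
    intro z hz
    rw [← hint]
    have := congrArg ψ (Zsqrtd.norm_eq_mul_conj z)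
    rwa [map_mul, hz, zero_mul, map_intCast] at this
  refine mds_of_generator φ hφ (by norm_num) (by norm_num) (fun j i => ψ (genRow j i)) ?_ ?_
  · intro e he a ha
    have hdet : (Matrix.of fun j t => ψ (genRow j (e t))).det ≠ 0 := by
      intro h
      have h' : ψ (Matrix.of fun j t => genRow j (e t)).det = 0 := by
        rw [RingHom.map_det]
        exact h
      rw [det_eq_minor4] at h'
      exact norm_minor4_genRow _ _ (he (by decide)) _ (he (by decide)) _ (he (by decide))
        (hker _ h')
    exact Matrix.eq_zero_of_vecMul_eq_zero hdet (funext ha)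
  · intro j l
    simp only [hconj, ← map_mul, ← map_sum]
    obtain ⟨hre, him⟩ := hermitian_genRow j l
    rw [hψ, (hint _).2 hre, (hint _).2 him]
    ring

/-- The 'Moreover' part of the main MDS quantum theorem (classical form): for
`(n−1) ∣ q²−1` and `k₀ = ⌊(n+q−1)/(q+1)⌋`, if `(n−1) ∤ k₀(q+1)`,
`(n−1) ∤ (k₀+1)(q+1)` and `2k₀ + q ≤ n`, then for some `n' ∈ {n, n+1}` there is an
MDS Hermitian self-orthogonal `[n', k₀+2]_{q²}` code whose Hermitian dual has
minimum distance `k₀+3`. -/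
theorem stmt16 (q n : ℕ) (hq : IsPrimePow q) (hn : 2 ≤ n)
    (hdvd : (n - 1) ∣ q ^ 2 - 1)
    (k₀ : ℕ) (hk₀ : k₀ = (n + q - 1) / (q + 1))
    (h1 : ¬ (n - 1) ∣ k₀ * (q + 1))
    (h2 : ¬ (n - 1) ∣ (k₀ + 1) * (q + 1))
    (h3 : 2 * k₀ + q ≤ n)
    (F : Type*) [Field F] [Fintype F] (hF : Fintype.card F = q ^ 2) :
    ∃ n' : ℕ, (n' = n ∨ n' = n + 1) ∧
      ∃ C : Submodule F (Fin n' → F),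
        Module.finrank F C = k₀ + 2 ∧ IsHermSelfOrth q C ∧
        MinDistEq C (n' - (k₀ + 2) + 1) ∧
        MinDistEq (hermDual q C) (k₀ + 3) := by
  obtain ⟨N, rfl⟩ : ∃ N, n = N + 1 := ⟨n - 1, by omega⟩
  rw [Nat.add_sub_cancel] at hdvd h1 h2
  have hq2 : 2 ≤ q := hq.two_le
  obtain ⟨φ, hφ⟩ := exists_frobenius hq hF
  -- `k₀ = ⌈N / (q + 1)⌉`
  have hdm := Nat.div_add_mod (N + 1 + q - 1) (q + 1)
  have hml := Nat.mod_lt (N + 1 + q - 1) (show 0 < q + 1 by omega)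
  rw [← hk₀, mul_comm] at hdm
  have hlow : N ≤ k₀ * (q + 1) := by omega
  have hup : k₀ * (q + 1) ≤ N + q := by omega
  refine ⟨N + 1, Or.inl rfl, ?_⟩
  by_cases hex : q = 5 ∧ N = 8 ∧ k₀ = 2
  · obtain ⟨rfl, rfl, rfl⟩ := hex
    exact exists_code_five hF φ hφ
  · have hkpos : 1 ≤ k₀ := by
      by_contra h
      exact h1 (by rw [show k₀ = 0 by omega]; simp)
    refine exists_code_of_not_dvd hq2 hdvd hF φ hφ (by omega) (by omega) ?_
    intro i hi j hj h0 hd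
    exact hex (exceptional_of_dvd hq2 hdvd hlow hup h1 h2 h3 (by omega) (by omega) h0 hd)
end

section
/- Let q be an odd prime power and let t be a positive integer such that gcd(t, q+1) divides (q+1)/2. Then the number of elements α ∈ 𝔽_{q²} satisfying α^{t(q−1)} = −1 equals gcd(t(q−1), (q+1)(q−1)); moreover gcd(t(q−1), (q+1)(q−1)/2) = gcd(t(q−1), (q+1)(q−1)). -/
/-!
Write `N = t(q-1)` and `2M = (q+1)(q-1) = |𝔽_{q²}^*|`. The hypothesis on `gcd(t, q+1)`,
multiplied by `q - 1`, says `gcd(N, 2M) ∣ M`, which gives the equality of the two gcds. By Bézout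
it also makes `-1 = g ^ M` (`g` a generator of the unit group) an `N`-th power. The solutions of
`α ^ N = -1` then form a coset of the kernel of `x ↦ x ^ N` on the cyclic group `𝔽_{q²}^*`,
and this kernel has `gcd(N, 2M)` elements.
-/

/-- In a finite field of odd characteristic, whose unit group has order `2M`, `-1` is an `N`-th
power as soon as `gcd(N, 2M) ∣ M`. -/
theorem exists_unit_pow_eq_neg_one {F : Type*} [Field F] [Fintype F] {N M : ℕ} (hM : 0 < M)
    (hcard : Nat.card Fˣ = 2 * M) (h : Nat.gcd N (2 * M) ∣ M) :
    ∃ u : Fˣ, u ^ N = -1 := by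
  obtain ⟨g, hg⟩ := IsCyclic.exists_ofOrder_eq_natCard (α := Fˣ)
  rw [hcard] at hg
  -- `g ^ M` is a square root of `1` other than `1`.
  have hgM : g ^ M = -1 := by
    have h1 : g ^ M ≠ 1 := by
      intro h1
      have := Nat.le_of_dvd hM (orderOf_dvd_of_pow_eq_one h1)
      omega
    have h2 : (g ^ M) ^ 2 = 1 := by
      rw [← pow_mul, mul_comm, ← hg, pow_orderOf_eq_one]
    have h3 : ((g ^ M : Fˣ) : F) ^ 2 = 1 := by
      rw [← Units.val_pow_eq_pow_val, h2, Units.val_one]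
    rcases sq_eq_one_iff.mp h3 with h | h
    · exact absurd (Units.ext h) h1
    · exact Units.ext h
  obtain ⟨c, hc⟩ := h
  refine ⟨g ^ (Nat.gcdA N (2 * M) * c), ?_⟩
  have hb : (M : ℤ) = Nat.gcdA N (2 * M) * c * N + (2 * M : ℕ) * (Nat.gcdB N (2 * M) * c) := by
    have := Nat.gcd_eq_gcd_ab N (2 * M)
    have hc' : (M : ℤ) = (Nat.gcd N (2 * M) : ℤ) * c := by exact_mod_cast hc
    rw [this] at hc'
    linear_combination hc'
  have h1 : g ^ (M : ℤ) = -1 := by rw [zpow_natCast, hgM]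
  rw [hb, zpow_add, zpow_mul g ((2 * M : ℕ) : ℤ), zpow_natCast g (2 * M), ← hg,
    pow_orderOf_eq_one, one_zpow, mul_one, zpow_mul, zpow_natCast] at h1
  rw [hg] at h1
  exact h1

/-- For `q` an odd prime power and `gcd(t, q+1) ∣ (q+1)/2`, the number of
`α ∈ 𝔽_{q²}` with `α^{t(q−1)} = −1` equals `gcd(t(q−1), (q+1)(q−1))`; moreover
`gcd(t(q−1), (q+1)(q−1)/2) = gcd(t(q−1), (q+1)(q−1))`. -/
theorem stmt17 (q : ℕ) (hq : IsPrimePow q) (hodd : Odd q)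
    (t : ℕ) (ht : 0 < t) (hgcd : Nat.gcd t (q + 1) ∣ (q + 1) / 2)
    (F : Type*) [Field F] [Fintype F] (hF : Fintype.card F = q ^ 2) :
    Set.ncard {α : F | α ^ (t * (q - 1)) = -1} =
      Nat.gcd (t * (q - 1)) ((q + 1) * (q - 1)) ∧
    Nat.gcd (t * (q - 1)) ((q + 1) * (q - 1) / 2) =
      Nat.gcd (t * (q - 1)) ((q + 1) * (q - 1)) := by
  obtain ⟨m, hm⟩ : ∃ m, q + 1 = 2 * m := by
    obtain ⟨k, hk⟩ := hodd
    exact ⟨k + 1, by omega⟩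
  have hq1 : 1 < q := hq.one_lt
  have hdvd : Nat.gcd (t * (q - 1)) (2 * (m * (q - 1))) ∣ m * (q - 1) := by
    rw [← mul_assoc, Nat.gcd_mul_right]
    rw [hm, Nat.mul_div_cancel_left _ two_pos] at hgcd
    exact Nat.mul_dvd_mul_right hgcd _
  have hM : 0 < m * (q - 1) := Nat.mul_pos (by omega) (by omega)
  have hcard : Nat.card Fˣ = 2 * (m * (q - 1)) := by
    rw [Nat.card_units, Nat.card_eq_fintype_card, hF, ← mul_assoc, ← hm]
    simpa using Nat.sq_sub_sq q 1
  have hN : t * (q - 1) ≠ 0 := Nat.mul_ne_zero ht.ne' (by omega)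
  rw [hm, mul_assoc, Nat.mul_div_cancel_left _ two_pos]
  generalize m * (q - 1) = M at *
  generalize t * (q - 1) = N at *
  refine ⟨?_, Nat.dvd_antisymm ?_ ?_⟩
  · obtain ⟨u, hu⟩ := exists_unit_pow_eq_neg_one hM hcard hdvd
    have hu' : (u : F) ^ N = -1 := by
      have := congrArg Units.val hu
      simpa using this
    have hS : {α : F | α ^ N = -1} =
        (fun k : Fˣ => (u : F) * k) '' ((powMonoidHom N : Fˣ →* Fˣ).ker : Set Fˣ) := by
      ext α
      simp only [Set.mem_ofPred_eq, Set.mem_image, SetLike.mem_coe, MonoidHom.mem_ker,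
        powMonoidHom_apply]
      constructor
      · intro hα
        have h0 : α ≠ 0 := by
          rintro rfl
          rw [zero_pow hN] at hα
          exact neg_ne_zero.mpr one_ne_zero hα.symm
        refine ⟨u⁻¹ * Units.mk0 α h0, ?_, by simp⟩
        ext
        simp [mul_pow, hα, hu']
      · rintro ⟨k, hk, rfl⟩
        rw [mul_pow, hu', ← Units.val_pow_eq_pow_val, hk]
        simp
    rw [hS, Set.ncard_image_of_injective]
    · rw [← Nat.card_coe_set_eq, ← hcard, Nat.gcd_comm]
      exact IsCyclic.card_powMonoidHom_ker Fˣ N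
    · intro a b hab
      exact Units.ext (mul_left_cancel₀ u.ne_zero hab)
  · exact Nat.gcd_dvd_gcd_of_dvd_right _ (Dvd.intro_left 2 rfl)
  · exact Nat.dvd_gcd (Nat.gcd_dvd_left _ _) hdvd
end
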